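/- Let G₁ be an r₁-regular graph on n₁ vertices and m₁ edges, let p,q ≥ 1 be integers, let G₂ = K_{p,q}, and let α ∈ [0,1]. (1) If r₁ = 1, then the A_α-spectrum of the subdivision-edge join G₁ ∨̲ G₂ consists precisely of: α; α(1+p) repeated q−1 times; α(1+q) repeated p−1 times; and the four roots of F(x) = (x² − α(3+p+q)x + (α²p+α²q+4α−2))·(x² − α(2+p+q)x + (α²+α²p+α²q+2αpq−pq)) − (1−α)²(x−α)((x−α)(p+q) − α(p+q)² + 2pq). (2) If r₁ ≥ 2, then the A_α-spectrum of G₁ ∨̲ G₂ consists precisely of: α(2+p+q) repeated m₁−n₁ times; α(m₁+p) repeated q−1 times; α(m₁+q) repeated p−1 times; the two roots of G_i(x) = x² − α(2+r₁+p+q)x + (α²r₁p+α²r₁q+3αr₁−r₁) − (1−α)λ_i(A_α(G₁)) for each i = 2,…,n₁; and the four roots of F(x) = (x² − α(2+r₁+p+q)x + r₁(α²p+α²q+4α−2))·(x² − α(2m₁+p+q)x + (α²m₁²+α²m₁p+α²m₁q+2αpq−pq)) − m₁(1−α)²(x−αr₁)((x−αm₁)(p+q) − α(p+q)² + 2pq).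 -/

import Mathlib

open Matrix Polynomial
open scoped Classical

noncomputable section

/-- `A_α(G) = α·D(G) + (1-α)·A(G)`, where `D(G)` is the diagonal degree matrix and
`A(G)` the adjacency matrix. -/
def Aalpha {V : Type*} [Fintype V] (G : SimpleGraph V) (α : ℝ) : Matrix V V ℝ :=
  α • Matrix.diagonal (fun v => (G.degree v : ℝ)) + (1 - α) • G.adjMatrix ℝ

/-- The subdivision-edge join `G₁ ∨̲ G₂`: take the subdivision graph `S(G₁)` (a new
vertex inserted in each edge of `G₁`) together with `G₂`, and join every inserted
vertex of `S(G₁)` with every vertex of `G₂`. -/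
def subdivisionEdgeJoin {V₁ V₂ : Type*} (G₁ : SimpleGraph V₁) (G₂ : SimpleGraph V₂) :
    SimpleGraph (V₁ ⊕ (↥G₁.edgeSet ⊕ V₂)) :=
  SimpleGraph.fromRel fun a b =>
    match a, b with
    | Sum.inl v, Sum.inr (Sum.inl e) => v ∈ (e : Sym2 V₁)
    | Sum.inr (Sum.inl _), Sum.inr (Sum.inr _) => True
    | Sum.inr (Sum.inr u), Sum.inr (Sum.inr w) => G₂.Adj u w
    | _, _ => False

namespace Matrix

/-- The matrix all of whose entries are `1`. -/
def allOnes (m n R : Type*) [One R] : Matrix m n R :=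
  of fun _ _ => 1

@[simp]
theorem allOnes_apply {m n R : Type*} [One R] (i : m) (j : n) : allOnes m n R i j = 1 :=
  rfl

section Blocks

variable {m n : Type*} [Fintype m] [Fintype n] [DecidableEq m] [DecidableEq n]

theorem det_fromBlocks_of_mul_eq₁₂ {R : Type*} [CommRing R] {A : Matrix m m R} {B U : Matrix m n R}
    (C : Matrix n m R) (D : Matrix n n R) (h : A * U = B) :
    (fromBlocks A B C D).det = A.det * (D - C * U).det := by
  have key : fromBlocks A B C D = fromBlocks A 0 C (D - C * U) * fromBlocks 1 U 0 1 := by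
    simp [fromBlocks_multiply, h]
  rw [key, det_mul, det_fromBlocks_zero₁₂, det_fromBlocks_zero₂₁]
  simp

theorem det_fromBlocks_of_mul_eq₂₁ {R : Type*} [CommRing R] (A : Matrix m m R) (B : Matrix m n R)
    {C L : Matrix n m R} {D : Matrix n n R} (h : D * L = C) :
    (fromBlocks A B C D).det = (A - B * L).det * D.det := by
  have key : fromBlocks A B C D = fromBlocks (A - B * L) B 0 D * fromBlocks 1 0 L 1 := by
    simp [fromBlocks_multiply, h]
  rw [key, det_mul, det_fromBlocks_zero₁₂, det_fromBlocks_zero₂₁]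
  simp

theorem det_sub_smul_of_one {R : Type*} [CommRing R] {B : Matrix m m R} {u : m → R}
    (h : B *ᵥ u = 1) (t : R) :
    (B - t • allOnes m m R).det = B.det * (1 - t * ∑ i, u i) := by
  have key : B - t • allOnes m m R
      = B * (1 + replicateCol Unit (-t • u) * replicateRow Unit (1 : m → R)) := by
    rw [mul_add, mul_one, ← Matrix.mul_assoc, ← replicateCol_mulVec, mulVec_smul, h]
    ext i j
    simp [mul_apply, allOnes, sub_eq_add_neg]
  rw [key, det_mul, det_one_add_replicateCol_mul_replicateRow]
  simp [dotProduct, Finset.mul_sum, sub_eq_add_neg]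

theorem pow_mul_det_scalar_sub_mul_comm {R : Type*} [CommRing R] (A : Matrix m n R)
    (B : Matrix n m R) (t : R) :
    t ^ Fintype.card n * (scalar m t - A * B).det
      = t ^ Fintype.card m * (scalar n t - B * A).det := by
  have h := congrArg (eval t) (charpoly_mul_comm' A B)
  simpa [eval_charpoly] using h

theorem det_scalar_sub_smul_of_charpoly_eq_prod {K : Type*} [Field K] {A : Matrix n n K}
    {μ : n → K} (h : A.charpoly = ∏ i, (X - C (μ i))) (y z : K) :
    (scalar n y - z • A).det = ∏ i, (y - z * μ i) := by
  obtain rfl | hz := eq_or_ne z 0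
  · simp
  · have key : scalar n y - z • A = z • (scalar n (y / z) - A) := by
      rw [smul_sub]
      congr 1
      ext i j
      obtain rfl | hij := eq_or_ne i j
      · simp; field_simp
      · simp [hij]
    rw [key, det_smul, ← eval_charpoly, h, eval_prod, ← Finset.card_univ, ← Finset.prod_const,
      ← Finset.prod_mul_distrib]
    refine Finset.prod_congr rfl fun i _ => ?_
    simp
    field_simp

theorem trace_eq_sum_of_charpoly_eq_prod {K : Type*} [Field K] {A : Matrix n n K}
    {μ : n → K} (h : A.charpoly = ∏ i, (X - C (μ i))) : A.trace = ∑ i, μ i := by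
  rw [trace_eq_neg_charpoly_nextCoeff, h, prod_X_sub_C_nextCoeff, neg_neg]

end Blocks

end Matrix

/-- The vertex-edge incidence matrix, with columns indexed by the edges of `G` only. -/
def edgeIncMatrix {V : Type*} (G : SimpleGraph V) : Matrix V G.edgeSet ℝ :=
  of fun v e => if v ∈ (e : Sym2 V) then 1 else 0

section Incidence

theorem edgeIncMatrix_apply_eq_incMatrix {V : Type*} (G : SimpleGraph V) (v : V) (e : G.edgeSet) :
    edgeIncMatrix G v e = G.incMatrix ℝ v e := by
  simp [edgeIncMatrix, SimpleGraph.incMatrix_apply', SimpleGraph.incidenceSet]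

variable {V : Type*} [Fintype V] (G : SimpleGraph V)

theorem sum_edgeSet_eq_sum_sym2 (f : Sym2 V → ℝ) (hf : ∀ e ∉ G.edgeSet, f e = 0) :
    ∑ e : G.edgeSet, f e = ∑ e, f e := by
  rw [← Finset.sum_subset (Finset.subset_univ G.edgeFinset) fun e _ he => hf e (by simpa using he)]
  exact (Finset.sum_subtype G.edgeFinset (by simp) f).symm

theorem sum_edgeIncMatrix_row {r : ℕ} (hreg : G.IsRegularOfDegree r) (v : V) :
    ∑ e, edgeIncMatrix G v e = r := by
  simp_rw [edgeIncMatrix_apply_eq_incMatrix]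
  rw [sum_edgeSet_eq_sum_sym2 G (fun e => G.incMatrix ℝ v e), SimpleGraph.sum_incMatrix_apply,
    hreg.degree_eq]
  intro e he
  exact G.incMatrix_of_notMem_incidenceSet fun h => he h.1

theorem sum_edgeIncMatrix_col (e : G.edgeSet) : ∑ v, edgeIncMatrix G v e = 2 := by
  simp_rw [edgeIncMatrix_apply_eq_incMatrix]
  exact G.sum_incMatrix_apply_of_mem_edgeSet e.2

theorem edgeIncMatrix_mul_transpose {r : ℕ} (hreg : G.IsRegularOfDegree r) :
    edgeIncMatrix G * (edgeIncMatrix G)ᵀ = G.adjMatrix ℝ + (r : ℝ) • 1 := by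
  have h : edgeIncMatrix G * (edgeIncMatrix G)ᵀ = G.incMatrix ℝ * (G.incMatrix ℝ)ᵀ := by
    ext v w
    simp_rw [mul_apply, transpose_apply, edgeIncMatrix_apply_eq_incMatrix]
    refine sum_edgeSet_eq_sum_sym2 G (fun e => G.incMatrix ℝ v e * G.incMatrix ℝ w e) fun e he => ?_
    rw [G.incMatrix_of_notMem_incidenceSet fun h => he h.1, zero_mul]
  rw [h, SimpleGraph.incMatrix_mul_transpose]
  ext v w
  obtain rfl | hvw := eq_or_ne v w
  · simp [hreg.degree_eq]
  · simp [hvw]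

end Incidence

section Aalpha

variable {V : Type*} [Fintype V] (G : SimpleGraph V) (α : ℝ)

theorem Aalpha_apply_self (v : V) : Aalpha G α v v = α * ∑ w, if G.Adj v w then 1 else 0 := by
  simp only [Aalpha, ← SimpleGraph.degree_eq_sum_if_adj]
  simp

theorem Aalpha_apply_ne {v w : V} (h : v ≠ w) :
    Aalpha G α v w = if G.Adj v w then 1 - α else 0 := by
  simp [Aalpha, h]

theorem Aalpha_eq_of_regular {r : ℕ} (hreg : G.IsRegularOfDegree r) :
    Aalpha G α = (α * r) • 1 + (1 - α) • G.adjMatrix ℝ := by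
  ext v w
  obtain rfl | h := eq_or_ne v w
  · simp [Aalpha, hreg.degree_eq]
  · simp [Aalpha, h]

end Aalpha

section Join

variable {V₁ V₂ : Type*} (G₁ : SimpleGraph V₁) (G₂ : SimpleGraph V₂)

@[simp]
theorem subdivisionEdgeJoin_not_adj_vertex_vertex (v w : V₁) :
    ¬ (subdivisionEdgeJoin G₁ G₂).Adj (.inl v) (.inl w) := by
  simp [subdivisionEdgeJoin]

@[simp]
theorem subdivisionEdgeJoin_adj_vertex_edge (v : V₁) (e : G₁.edgeSet) :
    (subdivisionEdgeJoin G₁ G₂).Adj (.inl v) (.inr (.inl e)) ↔ v ∈ (e : Sym2 V₁) := by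
  simp [subdivisionEdgeJoin]

@[simp]
theorem subdivisionEdgeJoin_adj_edge_vertex (e : G₁.edgeSet) (v : V₁) :
    (subdivisionEdgeJoin G₁ G₂).Adj (.inr (.inl e)) (.inl v) ↔ v ∈ (e : Sym2 V₁) := by
  simp [subdivisionEdgeJoin]

@[simp]
theorem subdivisionEdgeJoin_not_adj_vertex_right (v : V₁) (w : V₂) :
    ¬ (subdivisionEdgeJoin G₁ G₂).Adj (.inl v) (.inr (.inr w)) := by
  simp [subdivisionEdgeJoin]

@[simp]
theorem subdivisionEdgeJoin_not_adj_right_vertex (v : V₁) (w : V₂) :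
    ¬ (subdivisionEdgeJoin G₁ G₂).Adj (.inr (.inr w)) (.inl v) := by
  simp [subdivisionEdgeJoin]

@[simp]
theorem subdivisionEdgeJoin_not_adj_edge_edge (e f : G₁.edgeSet) :
    ¬ (subdivisionEdgeJoin G₁ G₂).Adj (.inr (.inl e)) (.inr (.inl f)) := by
  simp [subdivisionEdgeJoin]

@[simp]
theorem subdivisionEdgeJoin_adj_edge_right (e : G₁.edgeSet) (w : V₂) :
    (subdivisionEdgeJoin G₁ G₂).Adj (.inr (.inl e)) (.inr (.inr w)) := by
  simp [subdivisionEdgeJoin]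

@[simp]
theorem subdivisionEdgeJoin_adj_right_edge (e : G₁.edgeSet) (w : V₂) :
    (subdivisionEdgeJoin G₁ G₂).Adj (.inr (.inr w)) (.inr (.inl e)) := by
  simp [subdivisionEdgeJoin]

@[simp]
theorem subdivisionEdgeJoin_adj_right_right (u w : V₂) :
    (subdivisionEdgeJoin G₁ G₂).Adj (.inr (.inr u)) (.inr (.inr w)) ↔ G₂.Adj u w := by
  simp only [subdivisionEdgeJoin, SimpleGraph.fromRel_adj, ne_eq, Sum.inr.injEq]
  exact ⟨fun h => h.2.elim id fun h => h.symm, fun h => ⟨h.ne, .inl h⟩⟩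

end Join

theorem scalar_sub_Aalpha_subdivisionEdgeJoin_completeBipartite {V : Type*} [Fintype V]
    (G : SimpleGraph V) {r : ℕ} (hreg : G.IsRegularOfDegree r) (p q : ℕ) (α x : ℝ) :
    scalar _ x - Aalpha (subdivisionEdgeJoin G (completeBipartiteGraph (Fin p) (Fin q))) α =
      fromBlocks ((x - α * r) • 1) (fromCols ((α - 1) • edgeIncMatrix G) 0)
        (fromRows ((α - 1) • (edgeIncMatrix G)ᵀ) 0)
        (fromBlocks ((x - α * (2 + p + q)) • 1) ((α - 1) • allOnes _ _ _)
          ((α - 1) • allOnes _ _ _)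
          (fromBlocks ((x - α * (Fintype.card G.edgeSet + q)) • 1) ((α - 1) • allOnes _ _ _)
            ((α - 1) • allOnes _ _ _)
            ((x - α * (Fintype.card G.edgeSet + p)) • 1))) := by
  have hrow (v : V) : (∑ e : G.edgeSet, if v ∈ (e : Sym2 V) then (1 : ℝ) else 0) = r :=
    sum_edgeIncMatrix_row G hreg v
  have hcol (e : G.edgeSet) : (∑ v, if v ∈ (e : Sym2 V) then (1 : ℝ) else 0) = 2 :=
    sum_edgeIncMatrix_col G e
  ext i j
  obtain rfl | hij := eq_or_ne i j
  · rw [Matrix.sub_apply, Aalpha_apply_self]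
    obtain v | e | a | b := i
    · simp [hrow, -Finset.sum_boole]
    · simp [hcol, -Finset.sum_boole, -mul_eq_mul_left_iff]
      ring
    · simp [-Finset.sum_boole, -mul_eq_mul_left_iff]
    · simp [-Finset.sum_boole, -mul_eq_mul_left_iff]
  · clear hrow hcol
    rw [Matrix.sub_apply, Aalpha_apply_ne _ _ hij]
    obtain v | e | a | b := i <;> obtain v' | e' | a' | b' := j <;>
      (try simp only [ne_eq, Sum.inl.injEq, Sum.inr.injEq] at hij) <;>
      simp [edgeIncMatrix, hij]
    all_goals split_ifs <;> ring

/-- The determinant of `x - α m - A_α(K_{p,q})`, with `a = x - α (m + q)` and `b = x - α (m + p)`. -/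
theorem det_completeBipartite_block {p q : ℕ} (hp : 1 ≤ p) (hq : 1 ≤ q) (a b β : ℝ) (ha : a ≠ 0)
    (hb : b ≠ 0) :
    (fromBlocks (a • (1 : Matrix (Fin p) (Fin p) ℝ)) (β • allOnes _ _ _) (β • allOnes _ _ _)
      (b • (1 : Matrix (Fin q) (Fin q) ℝ))).det =
      a ^ (p - 1) * b ^ (q - 1) * (a * b - β ^ 2 * p * q) := by
  rw [det_fromBlocks_of_mul_eq₁₂ (U := (β / a) • allOnes _ _ _)]
  · have h : b • (1 : Matrix (Fin q) (Fin q) ℝ)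
        - (β • allOnes (Fin q) (Fin p) ℝ) * ((β / a) • allOnes (Fin p) (Fin q) ℝ)
        = b • (1 : Matrix (Fin q) (Fin q) ℝ) - (β ^ 2 * p / a) • allOnes _ _ _ := by
      congr 1
      ext i j
      simp [mul_apply]
      ring
    rw [h, det_sub_smul_of_one (u := fun _ => b⁻¹)]
    · obtain ⟨p, rfl⟩ := Nat.exists_eq_add_of_le' hp
      obtain ⟨q, rfl⟩ := Nat.exists_eq_add_of_le' hq
      simp
      field_simp
      ring
    · ext i
      simp [mulVec, dotProduct, one_apply, hb]
  · ext i j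
    simp
    field_simp

theorem det_fromBlocks_of_mulVec_eq_one {m n : Type*} [Fintype m] [Fintype n] [DecidableEq m]
    [DecidableEq n] {R : Type*} [CommRing R] (B : Matrix m m R) {K : Matrix n n R} {w : n → R}
    (hw : K *ᵥ w = 1) (β : R) :
    (fromBlocks B (β • allOnes _ _ _) (β • allOnes _ _ _) K).det =
      (B - (β ^ 2 * ∑ i, w i) • allOnes _ _ _).det * K.det := by
  rw [det_fromBlocks_of_mul_eq₂₁ (L := β • of fun i _ => w i)]
  · congr 3
    ext i j
    simp [mul_apply, ← Finset.mul_sum]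
    ring
  · ext i j
    have := congrFun hw i
    simp only [mulVec, dotProduct, Pi.one_apply] at this
    simp [mul_apply, mul_left_comm, ← Finset.mul_sum, this]

theorem completeBipartite_block_mulVec {p q : ℕ} (a b β : ℝ) (hD : a * b - β ^ 2 * p * q ≠ 0) :
    (fromBlocks (a • (1 : Matrix (Fin p) (Fin p) ℝ)) (β • allOnes _ _ _) (β • allOnes _ _ _)
      (b • (1 : Matrix (Fin q) (Fin q) ℝ))) *ᵥ
      Sum.elim (fun _ => (b - β * q) / (a * b - β ^ 2 * p * q))
        (fun _ => (a - β * p) / (a * b - β ^ 2 * p * q)) = 1 := by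
  generalize h : a * b - β ^ 2 * p * q = D at hD
  ext i
  obtain i | i := i <;>
  · simp [mulVec, dotProduct, one_apply]
    field_simp
    rw [← h]
    ring


section EdgeBlock

variable {V : Type*} [Fintype V] (G : SimpleGraph V) {r : ℕ} (hreg : G.IsRegularOfDegree r)

include hreg

theorem edgeBlock_mulVec_const {z t : ℝ} (h : z - t * (2 * r) ≠ 0) :
    (z • 1 - t • ((edgeIncMatrix G)ᵀ * edgeIncMatrix G)) *ᵥ (fun _ => (z - t * (2 * r))⁻¹) = 1 := by
  have h1 : edgeIncMatrix G *ᵥ (fun _ => (z - t * (2 * r))⁻¹)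
      = fun _ => r * (z - t * (2 * r))⁻¹ := by
    ext v
    rw [mulVec, dotProduct, ← Finset.sum_mul, sum_edgeIncMatrix_row G hreg]
  have h2 : (edgeIncMatrix G)ᵀ *ᵥ (fun _ => r * (z - t * (2 * r))⁻¹)
      = fun _ => 2 * (r * (z - t * (2 * r))⁻¹) := by
    ext e
    simp_rw [mulVec, dotProduct, transpose_apply]
    rw [← Finset.sum_mul, sum_edgeIncMatrix_col]
  rw [sub_mulVec, smul_mulVec, smul_mulVec, one_mulVec, ← mulVec_mulVec, h1, h2]
  ext e
  simp only [Pi.sub_apply, Pi.smul_apply, smul_eq_mul, Pi.one_apply]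
  rw [← mul_inv_cancel₀ h]
  ring

theorem pow_mul_det_edgeBlock {α : ℝ} {μ : V → ℝ}
    (hch : (Aalpha G α).charpoly = ∏ i, (X - C (μ i))) {y : ℝ} (hy : y ≠ 0) (z : ℝ) :
    y ^ Fintype.card V * (z ^ Fintype.card V *
      (z • 1 - ((1 - α) ^ 2 / y) • ((edgeIncMatrix G)ᵀ * edgeIncMatrix G)).det) =
    z ^ Fintype.card G.edgeSet * ∏ i, (y * z - (1 - α) * (μ i + r * (1 - 2 * α))) := by
  have h := pow_mul_det_scalar_sub_mul_comm (((1 - α) ^ 2 / y) • (edgeIncMatrix G)ᵀ)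
    (edgeIncMatrix G) z
  have hA : scalar V z - edgeIncMatrix G * (((1 - α) ^ 2 / y) • (edgeIncMatrix G)ᵀ)
      = scalar V (z - (1 - α) / y * (r * (1 - 2 * α))) - ((1 - α) / y) • Aalpha G α := by
    rw [Matrix.mul_smul, edgeIncMatrix_mul_transpose G hreg, Aalpha_eq_of_regular G α hreg]
    ext v w
    obtain rfl | hvw := eq_or_ne v w
    · simp
      ring
    · by_cases hadj : G.Adj v w
      · simp [hvw, hadj]
        ring
      · simp [hvw, hadj]
  rw [hA, det_scalar_sub_smul_of_charpoly_eq_prod hch, Matrix.smul_mul, scalar_apply,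
    ← smul_one_eq_diagonal] at h
  rw [h, mul_left_comm, ← Finset.card_univ (α := V), ← Finset.prod_const, ← Finset.prod_mul_distrib]
  congr 1
  refine Finset.prod_congr rfl fun i _ => ?_
  field_simp
  ring

end EdgeBlock

theorem eval_charpoly_subdivisionEdgeJoin_completeBipartite {V : Type*} [Fintype V]
    (G : SimpleGraph V) {r : ℕ} (hreg : G.IsRegularOfDegree r) {p q : ℕ} (hp : 1 ≤ p) (hq : 1 ≤ q)
    {α : ℝ} {μ : V → ℝ} (hch : (Aalpha G α).charpoly = ∏ i, (X - C (μ i)))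
    {i₀ : V} (hi₀ : μ i₀ = r) {x y z a b : ℝ} {m : ℕ} (hm : Fintype.card G.edgeSet = m)
    (hy : x - α * r = y) (hz : x - α * (2 + p + q) = z)
    (ha : x - α * (m + q) = a) (hb : x - α * (m + p) = b)
    (hy0 : y ≠ 0) (ha0 : a ≠ 0) (hb0 : b ≠ 0) (hD0 : a * b - (1 - α) ^ 2 * p * q ≠ 0)
    (hG0 : y * z - (1 - α) ^ 2 * (2 * r) ≠ 0) :
    z ^ Fintype.card V * (Aalpha (subdivisionEdgeJoin G
        (completeBipartiteGraph (Fin p) (Fin q))) α).charpoly.eval x =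
      z ^ m * a ^ (p - 1) * b ^ (q - 1) *
        (∏ i ∈ Finset.univ.erase i₀, (y * z - (1 - α) * (μ i + r * (1 - 2 * α)))) *
        ((y * z - (1 - α) ^ 2 * (2 * r)) * (a * b - (1 - α) ^ 2 * p * q)
          - m * (1 - α) ^ 2 * y * (p * b + q * a + 2 * (1 - α) * p * q)) := by
  have hβ : (α - 1) ^ 2 = (1 - α) ^ 2 := by ring
  rw [← hβ] at hD0
  have hμ0 : z - (1 - α) ^ 2 / y * (2 * r) ≠ 0 := by
    intro h
    apply hG0
    field_simp at h
    linarith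
  have hE := pow_mul_det_edgeBlock G hreg hch hy0 z
  rw [hm, ← Finset.mul_prod_erase _ _ (Finset.mem_univ i₀), hi₀] at hE
  rw [eval_charpoly, scalar_sub_Aalpha_subdivisionEdgeJoin_completeBipartite G hreg, hm, hy, hz, ha,
    hb, det_fromBlocks_of_mul_eq₁₂ (U := fromCols (((α - 1) / y) • edgeIncMatrix G) 0)]
  · have hS : fromRows ((α - 1) • (edgeIncMatrix G)ᵀ) (0 : Matrix (Fin p ⊕ Fin q) V ℝ)
        * fromCols (((α - 1) / y) • edgeIncMatrix G) (0 : Matrix V (Fin p ⊕ Fin q) ℝ)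
        = fromBlocks (((1 - α) ^ 2 / y) • ((edgeIncMatrix G)ᵀ * edgeIncMatrix G)) 0 0 0 := by
      rw [fromRows_mul_fromCols]
      simp only [Matrix.mul_zero, Matrix.zero_mul, Matrix.smul_mul, Matrix.mul_smul, smul_smul]
      rw [smul_zero, div_eq_mul_inv, mul_right_comm, ← sq, hβ, div_eq_mul_inv]
    rw [hS, sub_eq_add_neg, fromBlocks_neg, fromBlocks_add]
    simp only [neg_zero, add_zero, ← sub_eq_add_neg]
    rw [det_fromBlocks_of_mulVec_eq_one _ (completeBipartite_block_mulVec a b (α - 1) hD0),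
      det_sub_smul_of_one (edgeBlock_mulVec_const G hreg hμ0),
      det_completeBipartite_block hp hq a b _ ha0 hb0, det_smul, det_one, mul_one]
    simp only [Fintype.sum_sum_type, Sum.elim_inl, Sum.elim_inr, Finset.sum_const,
      Finset.card_univ, Fintype.card_fin, hm, nsmul_eq_mul]
    rw [hβ]
    rw [hβ] at hD0
    generalize (z • 1 - ((1 - α) ^ 2 / y) • ((edgeIncMatrix G)ᵀ * edgeIncMatrix G)).det = d at hE ⊢
    have hμ : z - (1 - α) ^ 2 / y * (2 * r) = (y * z - (1 - α) ^ 2 * (2 * r)) / y := by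
      field_simp
    rw [hμ]
    have hG : y * z - (1 - α) * (r + r * (1 - 2 * α)) = y * z - (1 - α) ^ 2 * (2 * r) := by
      ring
    rw [hG] at hE
    generalize y * z - (1 - α) ^ 2 * (2 * r) = g at hE hG0 ⊢
    generalize hD : a * b - (1 - α) ^ 2 * p * q = D at hD0 ⊢
    have hF : g * ((1 - (1 - α) ^ 2 * (p * ((b - (α - 1) * q) / D) + q * ((a - (α - 1) * p) / D)) *
        (m * (g / y)⁻¹)) * D) =
        g * D - m * (1 - α) ^ 2 * y * (p * b + q * a + 2 * (1 - α) * p * q) := by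
      field_simp
      ring
    linear_combination (1 - (1 - α) ^ 2 * (p * ((b - (α - 1) * q) / D)
      + q * ((a - (α - 1) * p) / D)) * (m * (g / y)⁻¹)) * D * a ^ (p - 1) * b ^ (q - 1) * hE
      + z ^ m * a ^ (p - 1) * b ^ (q - 1) *
        (∏ i ∈ Finset.univ.erase i₀, (y * z - (1 - α) * (μ i + r * (1 - 2 * α)))) * hF
  · ext v e
    obtain e | w := e
    · simp
      field_simp
    · simp

namespace Polynomial

theorem eq_of_forall_eval_eq_of_eval_ne_zero {R : Type*} [CommRing R] [IsDomain R] [Infinite R]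
    {P Q Z : R[X]} (hZ : Z ≠ 0) (h : ∀ x, Z.eval x ≠ 0 → P.eval x = Q.eval x) : P = Q := by
  refine mul_left_cancel₀ hZ (Polynomial.funext fun x => ?_)
  rw [eval_mul, eval_mul]
  by_cases hx : Z.eval x = 0
  · simp [hx]
  · rw [h x hx]

theorem X_sq_sub_C_mul_X_add_C_ne_zero {R : Type*} [CommRing R] [Nontrivial R] (b c : R) :
    (X ^ 2 - C b * X + C c : R[X]) ≠ 0 := by
  intro h
  simpa [coeff_X, coeff_C] using congrArg (coeff · 2) h

end Polynomial

theorem charpoly_subdivisionEdgeJoin_completeBipartite {V : Type*} [Fintype V]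
    (G : SimpleGraph V) {r : ℕ} (hreg : G.IsRegularOfDegree r) {p q : ℕ} (hp : 1 ≤ p) (hq : 1 ≤ q)
    {α : ℝ} {μ : V → ℝ} (hch : (Aalpha G α).charpoly = ∏ i, (X - C (μ i)))
    {i₀ : V} (hi₀ : μ i₀ = r) {m : ℕ} (hm : Fintype.card G.edgeSet = m) :
    (X - C (α * (2 + p + q))) ^ Fintype.card V *
        (Aalpha (subdivisionEdgeJoin G (completeBipartiteGraph (Fin p) (Fin q))) α).charpoly =
      (X - C (α * (2 + p + q))) ^ m *
        (X - C (α * (m + p))) ^ (q - 1) *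
        (X - C (α * (m + q))) ^ (p - 1) *
        (∏ i ∈ Finset.univ.erase i₀,
          (X ^ 2 - C (α * (2 + r + p + q)) * X
            + C (α ^ 2 * r * p + α ^ 2 * r * q + 3 * α * r - r - (1 - α) * μ i))) *
        ((X ^ 2 - C (α * (2 + r + p + q)) * X
            + C (r * (α ^ 2 * p + α ^ 2 * q + 4 * α - 2))) *
            (X ^ 2 - C (α * (2 * m + p + q)) * X
              + C (α ^ 2 * m ^ 2 + α ^ 2 * m * p + α ^ 2 * m * q + 2 * α * p * q - p * q))
          - C (m * (1 - α) ^ 2) * (X - C (α * r)) *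
            (C ((p : ℝ) + q) * (X - C (α * m)) - C (α * ((p : ℝ) + q) ^ 2)
              + C (2 * (p : ℝ) * q))) := by
  refine eq_of_forall_eval_eq_of_eval_ne_zero
    (Z := (X - C (α * r)) * (X - C (α * (m + q))) * (X - C (α * (m + p))) *
      (X ^ 2 - C (α * (2 * m + p + q)) * X
        + C (α ^ 2 * m ^ 2 + α ^ 2 * m * p + α ^ 2 * m * q + 2 * α * p * q - p * q)) *
      (X ^ 2 - C (α * (2 + r + p + q)) * X + C (r * (α ^ 2 * p + α ^ 2 * q + 4 * α - 2))))
    ?_ fun x hx => ?_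
  · exact mul_ne_zero (mul_ne_zero (mul_ne_zero (mul_ne_zero (X_sub_C_ne_zero _)
      (X_sub_C_ne_zero _)) (X_sub_C_ne_zero _)) (X_sq_sub_C_mul_X_add_C_ne_zero _ _))
      (X_sq_sub_C_mul_X_add_C_ne_zero _ _)
  · have hD : x ^ 2 - α * (2 * m + p + q) * x
        + (α ^ 2 * m ^ 2 + α ^ 2 * m * p + α ^ 2 * m * q + 2 * α * p * q - p * q) =
        (x - α * (m + q)) * (x - α * (m + p)) - (1 - α) ^ 2 * p * q := by
      ring
    have hG : x ^ 2 - α * (2 + r + p + q) * x + r * (α ^ 2 * p + α ^ 2 * q + 4 * α - 2) =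
        (x - α * r) * (x - α * (2 + p + q)) - (1 - α) ^ 2 * (2 * r) := by
      ring
    have hGi (i : V) : x ^ 2 - α * (2 + r + p + q) * x
        + (α ^ 2 * r * p + α ^ 2 * r * q + 3 * α * r - r - (1 - α) * μ i) =
        (x - α * r) * (x - α * (2 + p + q)) - (1 - α) * (μ i + r * (1 - 2 * α)) := by
      ring
    simp only [eval_mul, eval_sub, eval_add, eval_pow, eval_X, eval_C, hD, hG, ne_eq,
      mul_eq_zero, not_or] at hx
    obtain ⟨⟨⟨⟨hy, ha⟩, hb⟩, hD0⟩, hG0⟩ := hx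
    have key := eval_charpoly_subdivisionEdgeJoin_completeBipartite G hreg hp hq hch hi₀ hm
      rfl rfl rfl rfl hy ha hb hD0 hG0
    simp only [eval_mul, eval_sub, eval_add, eval_pow, eval_X, eval_C, eval_prod, hD, hG, hGi, key]
    ring

section Regular

variable {V : Type*} [Fintype V] (G : SimpleGraph V) {r : ℕ} (hreg : G.IsRegularOfDegree r)

include hreg

theorem trace_Aalpha_of_regular (α : ℝ) : (Aalpha G α).trace = Fintype.card V * (α * r) := by
  simp [Aalpha_eq_of_regular G α hreg]
  ring

theorem eval_charpoly_Aalpha_of_regular [Nonempty V] (α : ℝ) :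
    (Aalpha G α).charpoly.eval (r : ℝ) = 0 := by
  rw [eval_charpoly, ← exists_mulVec_eq_zero_iff]
  refine ⟨fun _ => 1, fun h => one_ne_zero (congrFun h (Classical.arbitrary V)), ?_⟩
  rw [Aalpha_eq_of_regular G α hreg, sub_mulVec, add_mulVec, smul_mulVec, smul_mulVec, one_mulVec,
    scalar_apply, ← smul_one_eq_diagonal, smul_mulVec, one_mulVec]
  ext v
  have := SimpleGraph.adjMatrix_mulVec_const_apply (G := G) (α := ℝ) (a := 1) (v := v)
  rw [hreg.degree_eq] at this
  simp [Function.const_def] at this ⊢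
  rw [this]
  ring

theorem le_of_eval_charpoly_Aalpha_eq_zero {α : ℝ} (hα : α ∈ Set.Icc (0 : ℝ) 1) {t : ℝ}
    (ht : (Aalpha G α).charpoly.eval t = 0) : t ≤ r := by
  by_contra! hlt
  rw [eval_charpoly] at ht
  refine det_ne_zero_of_sum_row_lt_diag (fun v => ?_) ht
  have hdiag : (scalar V t - Aalpha G α) v v = t - α * r := by
    simp [Aalpha_eq_of_regular G α hreg]
  have hoff : ∑ w ∈ Finset.univ.erase v, ‖(scalar V t - Aalpha G α) v w‖ = (1 - α) * r := by
    have h1 : ∀ w ∈ Finset.univ.erase v,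
        ‖(scalar V t - Aalpha G α) v w‖ = (1 - α) * if G.Adj v w then 1 else 0 := by
      intro w hw
      have hvw : v ≠ w := (Finset.ne_of_mem_erase hw).symm
      rw [Matrix.sub_apply, Aalpha_apply_ne G α hvw]
      split_ifs <;> simp [hvw, abs_of_nonpos (sub_nonpos.mpr hα.2)]
    rw [Finset.sum_congr rfl h1, ← Finset.mul_sum, Finset.sum_erase _ (by simp),
      ← SimpleGraph.degree_eq_sum_if_adj, hreg.degree_eq]
  have hr : (0 : ℝ) ≤ r := r.cast_nonneg
  rw [hdiag, hoff, Real.norm_eq_abs]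
  refine lt_of_lt_of_le ?_ (le_abs_self _)
  linarith

theorem two_mul_card_edgeSet_of_regular :
    2 * Fintype.card G.edgeSet = Fintype.card V * r := by
  have h := G.sum_degrees_eq_twice_card_edges
  simp only [hreg.degree_eq, Finset.sum_const, Finset.card_univ, smul_eq_mul] at h
  rw [h, ← SimpleGraph.edgeFinset_card]

end Regular

section Extremal

variable {V : Type*} [Fintype V] (G : SimpleGraph V) {r : ℕ} (hreg : G.IsRegularOfDegree r)
  {α : ℝ} {μ : V → ℝ} (hch : (Aalpha G α).charpoly = ∏ i, (X - C (μ i)))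
  {i₀ : V} (hmax : ∀ i, μ i ≤ μ i₀)

include hreg hch hmax

theorem max_eigenvalue_Aalpha_of_regular (hα : α ∈ Set.Icc (0 : ℝ) 1) : μ i₀ = r := by
  have hle : μ i₀ ≤ r := by
    refine le_of_eval_charpoly_Aalpha_eq_zero G hreg hα ?_
    rw [hch, eval_prod]
    exact Finset.prod_eq_zero (Finset.mem_univ i₀) (by simp)
  have : Nonempty V := ⟨i₀⟩
  have hroot := eval_charpoly_Aalpha_of_regular G hreg α
  rw [hch, eval_prod, Finset.prod_eq_zero_iff] at hroot
  obtain ⟨i, -, hi⟩ := hroot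
  have hri : (r : ℝ) = μ i := by simpa [sub_eq_zero] using hi
  exact le_antisymm hle (hri ▸ hmax i)

variable {p q : ℕ} (hp : 1 ≤ p) (hq : 1 ≤ q) {m : ℕ} (hm : Fintype.card G.edgeSet = m)

include hp hq hm

theorem charpoly_subdivisionEdgeJoin_completeBipartite_of_two_le (hα : α ∈ Set.Icc (0 : ℝ) 1)
    (hr : 2 ≤ r) :
    (Aalpha (subdivisionEdgeJoin G (completeBipartiteGraph (Fin p) (Fin q))) α).charpoly =
      (X - C (α * (2 + p + q))) ^ (m - Fintype.card V) *
        (X - C (α * (m + p))) ^ (q - 1) *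
        (X - C (α * (m + q))) ^ (p - 1) *
        (∏ i ∈ Finset.univ.erase i₀,
          (X ^ 2 - C (α * (2 + r + p + q)) * X
            + C (α ^ 2 * r * p + α ^ 2 * r * q + 3 * α * r - r - (1 - α) * μ i))) *
        ((X ^ 2 - C (α * (2 + r + p + q)) * X
            + C (r * (α ^ 2 * p + α ^ 2 * q + 4 * α - 2))) *
            (X ^ 2 - C (α * (2 * m + p + q)) * X
              + C (α ^ 2 * m ^ 2 + α ^ 2 * m * p + α ^ 2 * m * q + 2 * α * p * q - p * q))
          - C (m * (1 - α) ^ 2) * (X - C (α * r)) *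
            (C ((p : ℝ) + q) * (X - C (α * m)) - C (α * ((p : ℝ) + q) ^ 2)
              + C (2 * (p : ℝ) * q))) := by
  have htwice := two_mul_card_edgeSet_of_regular G hreg
  rw [hm] at htwice
  have hle : Fintype.card V ≤ m := by nlinarith
  refine mul_left_cancel₀
    (pow_ne_zero (Fintype.card V) (X_sub_C_ne_zero (α * (2 + p + q)))) ?_
  rw [charpoly_subdivisionEdgeJoin_completeBipartite G hreg hp hq hch
    (max_eigenvalue_Aalpha_of_regular G hreg hch hmax hα) hm]
  simp only [← mul_assoc, ← pow_add, Nat.add_sub_cancel' hle]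

theorem charpoly_subdivisionEdgeJoin_completeBipartite_of_eq_one (hα : α ∈ Set.Icc (0 : ℝ) 1)
    (hconn : G.Connected) (hr : r = 1) :
    (Aalpha (subdivisionEdgeJoin G (completeBipartiteGraph (Fin p) (Fin q))) α).charpoly =
      (X - C α) *
        (X - C (α * (1 + p))) ^ (q - 1) *
        (X - C (α * (1 + q))) ^ (p - 1) *
        ((X ^ 2 - C (α * (3 + p + q)) * X + C (α ^ 2 * p + α ^ 2 * q + 4 * α - 2)) *
            (X ^ 2 - C (α * (2 + p + q)) * X
              + C (α ^ 2 + α ^ 2 * p + α ^ 2 * q + 2 * α * p * q - p * q))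
          - C ((1 - α) ^ 2) * (X - C α) *
            (C ((p : ℝ) + q) * (X - C α) - C (α * ((p : ℝ) + q) ^ 2)
              + C (2 * (p : ℝ) * q))) := by
  subst hr
  have hcard := hconn.card_vert_le_card_edgeSet_add_one
  have htwice := two_mul_card_edgeSet_of_regular G hreg
  have hpos : 0 < Fintype.card V := Fintype.card_pos_iff.mpr ⟨i₀⟩
  rw [Nat.card_eq_fintype_card, Nat.card_eq_fintype_card, hm] at hcard
  rw [hm] at htwice
  obtain rfl : m = 1 := by omega
  have hV : Fintype.card V = 2 := by omega
  have hi₀ := max_eigenvalue_Aalpha_of_regular G hreg hch hmax hα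
  obtain ⟨j, hj⟩ : ∃ j, Finset.univ.erase i₀ = {j} := by
    rw [← Finset.card_eq_one, Finset.card_erase_of_mem (Finset.mem_univ _), Finset.card_univ, hV]
  have hμj : μ j = 2 * α - 1 := by
    have htr := trace_eq_sum_of_charpoly_eq_prod hch
    rw [trace_Aalpha_of_regular G hreg, ← Finset.add_sum_erase _ _ (Finset.mem_univ i₀), hj,
      Finset.sum_singleton, hi₀, hV] at htr
    push_cast at htr
    linarith
  have hmain := charpoly_subdivisionEdgeJoin_completeBipartite G hreg hp hq hch hi₀ hm
  have hG : (X ^ 2 - C (α * (2 + (1 : ℕ) + p + q)) * X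
      + C (α ^ 2 * (1 : ℕ) * p + α ^ 2 * (1 : ℕ) * q + 3 * α * (1 : ℕ) - (1 : ℕ)
        - (1 - α) * (2 * α - 1)) : ℝ[X]) = (X - C (α * (2 + p + q))) * (X - C α) := by
    have h1 : α ^ 2 * (1 : ℕ) * p + α ^ 2 * (1 : ℕ) * q + 3 * α * (1 : ℕ) - (1 : ℕ)
        - (1 - α) * (2 * α - 1) = α * (2 + p + q) * α := by
      push_cast
      ring
    have h2 : α * (2 + (1 : ℕ) + p + q) = α * (2 + p + q) + α := by
      push_cast
      ring
    rw [h1, h2, C_mul, C_add]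
    ring
  rw [hj, Finset.prod_singleton, hμj, hG, hV] at hmain
  refine mul_left_cancel₀ (pow_ne_zero 2 (X_sub_C_ne_zero (α * (2 + p + q)))) ?_
  rw [hmain, show (3 : ℝ) = 2 + (1 : ℕ) by norm_num]
  simp only [Nat.cast_one, one_mul, mul_one, one_pow]
  ring

end Extremal

/-- Corollary: the `A_α`-spectrum (as the factorization of the `A_α`-characteristic
polynomial) of the subdivision-edge join `G₁ ∨̲ K_{p,q}` of an `r₁`-regular graph `G₁`
and the complete bipartite graph `K_{p,q}`, in the cases `r₁ = 1` and `r₁ ≥ 2`. -/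
theorem Aalpha_spectrum_subdivisionEdgeJoin_completeBipartite
    {n₁ m₁ r₁ p q : ℕ} (hp : 1 ≤ p) (hq : 1 ≤ q)
    (G₁ : SimpleGraph (Fin n₁))
    (hconn₁ : G₁.Connected) (hreg₁ : G₁.IsRegularOfDegree r₁)
    (hm : Fintype.card G₁.edgeSet = m₁)
    (α : ℝ) (hα : α ∈ Set.Icc (0 : ℝ) 1)
    (μ₁ : Fin n₁ → ℝ) (hμ₁ : Antitone μ₁)
    (hμ₁ch : (Aalpha G₁ α).charpoly = ∏ i, (X - C (μ₁ i))) :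
    (r₁ = 1 →
      (Aalpha (subdivisionEdgeJoin G₁ (completeBipartiteGraph (Fin p) (Fin q))) α).charpoly =
        (X - C α) *
        (X - C (α * (1 + p))) ^ (q - 1) *
        (X - C (α * (1 + q))) ^ (p - 1) *
        ((X ^ 2 - C (α * (3 + p + q)) * X + C (α ^ 2 * p + α ^ 2 * q + 4 * α - 2)) *
            (X ^ 2 - C (α * (2 + p + q)) * X
              + C (α ^ 2 + α ^ 2 * p + α ^ 2 * q + 2 * α * p * q - p * q))
          - C ((1 - α) ^ 2) * (X - C α) *
            (C ((p : ℝ) + q) * (X - C α) - C (α * ((p : ℝ) + q) ^ 2)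
              + C (2 * (p : ℝ) * q)))) ∧
    (2 ≤ r₁ →
      (Aalpha (subdivisionEdgeJoin G₁ (completeBipartiteGraph (Fin p) (Fin q))) α).charpoly =
        (X - C (α * (2 + p + q))) ^ (m₁ - n₁) *
        (X - C (α * (m₁ + p))) ^ (q - 1) *
        (X - C (α * (m₁ + q))) ^ (p - 1) *
        (∏ i ∈ Finset.univ.filter (fun i : Fin n₁ => i.val ≠ 0),
          (X ^ 2 - C (α * (2 + r₁ + p + q)) * X
            + C (α ^ 2 * r₁ * p + α ^ 2 * r₁ * q + 3 * α * r₁ - r₁ - (1 - α) * μ₁ i))) *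
        ((X ^ 2 - C (α * (2 + r₁ + p + q)) * X
            + C (r₁ * (α ^ 2 * p + α ^ 2 * q + 4 * α - 2))) *
            (X ^ 2 - C (α * (2 * m₁ + p + q)) * X
              + C (α ^ 2 * m₁ ^ 2 + α ^ 2 * m₁ * p + α ^ 2 * m₁ * q + 2 * α * p * q - p * q))
          - C (m₁ * (1 - α) ^ 2) * (X - C (α * r₁)) *
            (C ((p : ℝ) + q) * (X - C (α * m₁)) - C (α * ((p : ℝ) + q) ^ 2)
              + C (2 * (p : ℝ) * q)))) := by
  have hn : 0 < n₁ := Fin.pos_iff_nonempty.mpr hconn₁.nonempty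
  have hmax (i : Fin n₁) : μ₁ i ≤ μ₁ ⟨0, hn⟩ := hμ₁ (Fin.mk_le_of_le_val (Nat.zero_le _))
  refine ⟨fun hr => ?_, fun hr => ?_⟩
  · convert charpoly_subdivisionEdgeJoin_completeBipartite_of_eq_one (m := m₁) G₁ hreg₁
      (by convert hμ₁ch) hmax hp hq (by convert hm) hα hconn₁ hr
  · have hfilter : Finset.univ.filter (fun i : Fin n₁ => i.val ≠ 0)
        = Finset.univ.erase ⟨0, hn⟩ := by
      ext i
      simp [Fin.ext_iff]
    rw [hfilter]
    convert charpoly_subdivisionEdgeJoin_completeBipartite_of_two_le (m := m₁) G₁ hreg₁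
      (by convert hμ₁ch) hmax hp hq (by convert hm) hα hr
    rw [Fintype.card_fin]
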